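/- arXiv:math/9904127 — 3 statements merged into one kernel-verified Lean document; each statement's English description precedes it below -/
import Mathlib

section
/- Let H be a complex Hilbert space, let v : H → H be a linear isometry, and let W ⊆ H be a nonzero subspace such that for all f, g ∈ W the rank-one operators h ↦ ⟨v(g), h⟩ • v(f) and h ↦ ⟨g, h⟩ • f on H coincide. Then there exists τ ∈ ℂ with |τ| = 1 such that v(f) = τ • f for all f ∈ W. -/
open scoped InnerProductSpace

/-! Let the operators `u i⟨u j, ·⟩` and `w i⟨w j, ·⟩` coincide for all `i, j`, and fix `j` with
`w j ≠ 0`. Evaluation at `u j` writes each `u i` as a multiple of `w i` by a scalar that depends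
only on `j`, and the norms of the operators with `i = j` show that this scalar is a phase. -/

section

open InnerProductSpace (rankOne norm_rankOne rankOne_apply)

variable {𝕜 : Type*} [RCLike 𝕜]

theorem eq_smul_of_rankOne_eq_rankOne {E F : Type*}
    [SeminormedAddCommGroup E] [NormedSpace 𝕜 E]
    [SeminormedAddCommGroup F] [InnerProductSpace 𝕜 F] {a c : E} {b d : F} (hb : ‖b‖ ≠ 0)
    (h : rankOne 𝕜 a b = rankOne 𝕜 c d) : a = (⟪d, b⟫_𝕜 / ⟪b, b⟫_𝕜) • c := by
  have hbb : ⟪b, b⟫_𝕜 ≠ 0 := by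
    rw [inner_self_eq_norm_sq_to_K]
    exact pow_ne_zero 2 (RCLike.ofReal_ne_zero.mpr hb)
  have h_eval : ⟪b, b⟫_𝕜 • a = ⟪d, b⟫_𝕜 • c := by
    simpa only [rankOne_apply] using DFunLike.congr_fun h b
  rw [div_eq_inv_mul, mul_smul, ← h_eval, inv_smul_smul₀ hbb]

theorem norm_eq_norm_of_rankOne_self_eq {E : Type*} [SeminormedAddCommGroup E]
    [InnerProductSpace 𝕜 E] {a b : E} (h : rankOne 𝕜 a a = rankOne 𝕜 b b) : ‖a‖ = ‖b‖ := by
  have h_sq : ‖a‖ * ‖a‖ = ‖b‖ * ‖b‖ := by simpa only [norm_rankOne] using congrArg norm h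
  exact (mul_self_inj (norm_nonneg a) (norm_nonneg b)).mp h_sq

theorem isometry_eq_phase_on_subspace_general {ι E : Type*} [NormedAddCommGroup E]
    [InnerProductSpace 𝕜 E] {u w : ι → E}
    (h : ∀ i j, rankOne 𝕜 (u i) (u j) = rankOne 𝕜 (w i) (w j)) :
    ∃ τ : 𝕜, ‖τ‖ = 1 ∧ ∀ i, u i = τ • w i := by
  have h_norm (i : ι) : ‖u i‖ = ‖w i‖ := norm_eq_norm_of_rankOne_self_eq (h i i)
  by_cases hw : ∃ j, w j ≠ 0
  · obtain ⟨j, hj⟩ := hw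
    have hwj : ‖w j‖ ≠ 0 := norm_ne_zero_iff.mpr hj
    have huj : ‖u j‖ ≠ 0 := (h_norm j).trans_ne hwj
    have hu (i : ι) : u i = (⟪w j, u j⟫_𝕜 / ⟪u j, u j⟫_𝕜) • w i :=
      eq_smul_of_rankOne_eq_rankOne huj (h i j)
    refine ⟨_, mul_right_cancel₀ hwj ?_, hu⟩
    rw [← norm_smul, ← hu j, h_norm j, one_mul]
  · push Not at hw
    refine ⟨1, norm_one, fun i ↦ ?_⟩
    rw [one_smul, hw i, ← norm_eq_zero, h_norm i, hw i, norm_zero]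

end

/-- **An isometry preserving rank-one operators over a subspace is a phase there.**
Let `v` be a linear isometry of a complex Hilbert space `H` and `W` a nonzero
subspace such that for all `f, g ∈ W` the rank-one operators
`h ↦ ⟪v g, h⟫ • v f` and `h ↦ ⟪g, h⟫ • f` coincide. Then there is a phase
`τ ∈ ℂ`, `|τ| = 1`, with `v f = τ • f` for all `f ∈ W`. -/
theorem isometry_eq_phase_on_subspace
    {H : Type*} [NormedAddCommGroup H] [InnerProductSpace ℂ H]
    (v : H →L[ℂ] H) (hv : ∀ f : H, ‖v f‖ = ‖f‖)
    (W : Submodule ℂ H) (hW : W ≠ ⊥)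
    (h : ∀ f ∈ W, ∀ g ∈ W, ∀ h : H, ⟪v g, h⟫_ℂ • v f = ⟪g, h⟫_ℂ • f) :
    ∃ τ : ℂ, ‖τ‖ = 1 ∧ ∀ f ∈ W, v f = τ • f := by
  obtain ⟨τ, hτ, hv_eq⟩ := isometry_eq_phase_on_subspace_general (u := fun f : W ↦ v f)
    (w := Subtype.val) fun f g ↦ ContinuousLinearMap.ext (h f f.2 g g.2)
  exact ⟨τ, hτ, fun f hf ↦ hv_eq ⟨f, hf⟩⟩
end

section
/- Let H be a complex Hilbert space and N a positive natural number, and let H^N denote the Hilbert space direct sum of N copies of H. For a unitary N×N complex matrix u, let Û_u be the unitary operator on H^N given by (Û_u x)_i = Σ_j u_{ij} • x_j, and let Û_{ū} be the corresponding operator for the entrywise complex conjugate matrix ū. If S is a bounded linear operator on H^N satisfying S ∘ Û_u = Û_{ū} ∘ S for every unitary N×N matrix u, then S = 0. -/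
/-!
The centre of `U(N)` already separates the two representations: the scalar matrix `i • 1` acts on
`H^N` as `i` and its entrywise conjugate acts as `-i`, so a linear intertwiner `S` satisfies
`i • S x = -i • S x`, which forces `S x = 0`.
-/

open Matrix Matrix.Module

theorem linearMap_eq_zero_of_map_smul_eq_smul {R V W : Type*} [Ring R] [IsDomain R]
    [AddCommGroup V] [Module R V] [AddCommGroup W] [Module R W] [Module.IsTorsionFree R W]
    (T : V →ₗ[R] W) {c d : R} (hcd : c ≠ d) (h : ∀ x, T (c • x) = d • T x) : T = 0 := by
  ext x
  by_contra hx
  exact hcd (smul_left_injective R hx ((map_smul T c x).symm.trans (h x)))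

theorem map_star_smul_one {R ι : Type*} [Semiring R] [StarAddMonoid R] [DecidableEq ι] (c : R) :
    (c • (1 : Matrix ι ι R)).map star = star c • 1 := by
  rw [smul_one_eq_diagonal, diagonal_map (star_zero R), smul_one_eq_diagonal]

/-- Besides `U(N)`, the set `𝒰` may be `SU(N)` with `3 ≤ N`, whose centre contains a nonreal scalar
matrix. -/
theorem intertwiner_of_conjugate_gauge_action_eq_zero_general
    {R ι V W : Type*} [Ring R] [IsDomain R] [StarRing R] [Fintype ι] [DecidableEq ι]
    [AddCommGroup V] [Module R V] [AddCommGroup W] [Module R W] [Module.IsTorsionFree R W]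
    {p q : ENNReal} (S : PiLp p (fun _ : ι => V) →ₗ[R] PiLp q (fun _ : ι => W))
    {𝒰 : Set (Matrix ι ι R)} {c : R} (hc : star c ≠ c) (hc𝒰 : c • 1 ∈ 𝒰)
    (hS : ∀ u ∈ 𝒰, ∀ x,
      S (WithLp.toLp p (u • x.ofLp)) = WithLp.toLp q (u.map star • (S x).ofLp)) :
    S = 0 := by
  have : Module.IsTorsionFree R (PiLp q fun _ : ι => W) :=
    (WithLp.ofLp_injective q).moduleIsTorsionFree _ (WithLp.ofLp_smul q)
  refine linearMap_eq_zero_of_map_smul_eq_smul S hc.symm fun x => ?_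
  have h := hS _ hc𝒰 x
  rwa [map_star_smul_one, smul_one_smul, smul_one_smul] at h

/-- **Disjointness of the defining representation of `U(N)` and its conjugate.**
Let `H` be a complex Hilbert space, `H^N` the `ℓ²`-direct sum of `N` copies of `H`,
and for a unitary `N × N` matrix `u` let `Û_u` be the operator
`(Û_u x)_i = Σ_j u_{ij} • x_j`, and `Û_ū` the corresponding operator for the
entrywise conjugate matrix `ū`. If a bounded operator `S` on `H^N` satisfies
`S ∘ Û_u = Û_ū ∘ S` for every unitary `u`, then `S = 0`. -/
theorem intertwiner_of_conjugate_gauge_action_eq_zero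
    {H : Type*} [NormedAddCommGroup H] [InnerProductSpace ℂ H] [CompleteSpace H]
    (N : ℕ) (hN : 0 < N)
    (S : PiLp 2 (fun _ : Fin N => H) →L[ℂ] PiLp 2 (fun _ : Fin N => H))
    (hS : ∀ u : Matrix (Fin N) (Fin N) ℂ, star u * u = 1 → u * star u = 1 →
      ∀ (x : PiLp 2 (fun _ : Fin N => H)) (i : Fin N),
        S ((WithLp.equiv 2 (Fin N → H)).symm fun k => ∑ j, u k j • x j) i
          = ∑ j, (starRingEnd ℂ) (u i j) • S x j) :
    S = 0 :=
  have hI : Complex.I ∈ unitary ℂ := by simp [Unitary.mem_iff]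
  have hI_conj : star Complex.I ≠ Complex.I := mt Complex.conj_eq_iff_im.1 (by simp)
  ContinuousLinearMap.coe_injective <|
    intertwiner_of_conjugate_gauge_action_eq_zero_general S.toLinearMap hI_conj
      (Unitary.smul_mem_of_mem hI (one_mem (unitaryGroup (Fin N) ℂ)))
      fun u hu x => PiLp.ext (hS u hu.1 hu.2 x)
end

section
/- Let L²(S¹) be the complex L² space of the unit circle with normalized Haar measure and L²(ℝ) the complex L² space of the real line with Lebesgue measure. Then the map θ̃ defined by (θ̃ f)(x) := π^{−1/2} · f((x−i)/(x+i)) / (x+i) for x ∈ ℝ is a unitary operator (a surjective linear isometry) from L²(S¹) onto L²(ℝ). In particular, (1/π)∫_ℝ |f((x−i)/(x+i))|²/(x²+1) dx = (1/2π)∫₀^{2π} |f(e^{iλ})|² dλ for every f ∈ L²(S¹). -/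
/-!
With `w x = π^{-1/2} / (x + i)`, the weight `‖w x‖² = 1 / (π (x² + 1))` is the density of the
standard Cauchy distribution, and the angle `2 arctan x + π` of the Cayley transform pushes this
distribution forward to normalized Haar measure. Hence the operator factors into two surjective
isometries: composition with the Cayley transform, from `L²(S¹)` onto `L²(ℝ)` of the Cauchy
distribution, followed by multiplication by `w`, from there onto `L²(ℝ)` of Lebesgue measure.
-/

open MeasureTheory Real AddCircle
open scoped Real

noncomputable section

instance : Fact (0 < 2 * π) := ⟨by positivity⟩

section WithDensity

variable {α 𝕜 E : Type*} [MeasurableSpace α] {μ : Measure α} [NormedField 𝕜]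
  [NormedAddCommGroup E] [NormedSpace 𝕜 E] {p : ENNReal} {w : α → 𝕜}

lemma eLpNorm_withDensity_enorm_rpow (hp : p ≠ ⊤) (hw : AEStronglyMeasurable w μ) (f : α → E) :
    eLpNorm f p (μ.withDensity fun x => ‖w x‖ₑ ^ p.toReal) = eLpNorm (fun x => w x • f x) p μ := by
  obtain rfl | hp₀ := eq_or_ne p 0
  · simp only [eLpNorm_exponent_zero]
  have hw_lt_top : ∀ᵐ x ∂μ, ‖w x‖ₑ ^ p.toReal < ⊤ :=
    ae_of_all _ fun _ => ENNReal.rpow_lt_top_of_nonneg ENNReal.toReal_nonneg enorm_ne_top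
  rw [eLpNorm_eq_lintegral_rpow_enorm_toReal hp₀ hp, eLpNorm_eq_lintegral_rpow_enorm_toReal hp₀ hp,
    lintegral_withDensity_eq_lintegral_mul_non_measurable₀ _ (hw.enorm.pow_const _) hw_lt_top]
  simp only [Pi.mul_apply, enorm_smul, ENNReal.mul_rpow_of_nonneg _ _ ENNReal.toReal_nonneg]

lemma absolutelyContinuous_withDensity_enorm_rpow (hw : AEStronglyMeasurable w μ)
    (hw₀ : ∀ᵐ x ∂μ, w x ≠ 0) (r : ℝ) : μ ≪ μ.withDensity fun x => ‖w x‖ₑ ^ r := by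
  refine withDensity_absolutelyContinuous' (hw.enorm.pow_const r) ?_
  filter_upwards [hw₀] with x hx
  simp [ENNReal.rpow_eq_zero_iff, hx]

lemma memLp_withDensity_enorm_rpow_iff (hp : p ≠ ⊤) (hw : AEStronglyMeasurable w μ)
    (hw₀ : ∀ᵐ x ∂μ, w x ≠ 0) {f : α → E} :
    MemLp f p (μ.withDensity fun x => ‖w x‖ₑ ^ p.toReal) ↔ MemLp (fun x => w x • f x) p μ := by
  have hac := absolutelyContinuous_withDensity_enorm_rpow hw hw₀ p.toReal
  rw [MemLp, MemLp, eLpNorm_withDensity_enorm_rpow hp hw]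
  refine and_congr_left fun _ => ⟨fun hf => hw.smul (hf.mono_ac hac), fun hwf => ?_⟩
  have hf : AEStronglyMeasurable f μ := (hw.inv₀.smul hwf).congr <| by
    filter_upwards [hw₀] with x hx
    exact inv_smul_smul₀ hx (f x)
  exact hf.mono_ac (withDensity_absolutelyContinuous _ _)

variable [Fact (1 ≤ p)]

/-- Multiplication by an a.e. nonvanishing function `w`, as a linear isometry into `Lᵖ(μ)`; its
domain is the `Lᵖ` space of the measure with density `‖w‖ᵖ` with respect to `μ`. -/
def lpWithDensitySMulₗᵢ (hp : p ≠ ⊤) (hw : AEStronglyMeasurable w μ) (hw₀ : ∀ᵐ x ∂μ, w x ≠ 0) :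
    Lp E p (μ.withDensity fun x => ‖w x‖ₑ ^ p.toReal) →ₗᵢ[𝕜] Lp E p μ where
  toFun F := ((memLp_withDensity_enorm_rpow_iff hp hw hw₀).1 (Lp.memLp F)).toLp _
  map_add' F G := by
    rw [← MemLp.toLp_add, MemLp.toLp_eq_toLp_iff]
    filter_upwards [(absolutelyContinuous_withDensity_enorm_rpow hw hw₀ _).ae_le
      (Lp.coeFn_add F G)] with x hx
    rw [hx, Pi.add_apply, Pi.add_apply, smul_add]
  map_smul' c F := by
    rw [RingHom.id_apply, ← MemLp.toLp_const_smul, MemLp.toLp_eq_toLp_iff]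
    filter_upwards [(absolutelyContinuous_withDensity_enorm_rpow hw hw₀ _).ae_le
      (Lp.coeFn_smul c F)] with x hx
    rw [hx, Pi.smul_apply, Pi.smul_apply, smul_comm]
  norm_map' F := by
    change ‖((memLp_withDensity_enorm_rpow_iff hp hw hw₀).1 (Lp.memLp F)).toLp _‖ = ‖F‖
    rw [Lp.norm_toLp, Lp.norm_def, eLpNorm_withDensity_enorm_rpow hp hw]

lemma coeFn_lpWithDensitySMulₗᵢ (hp : p ≠ ⊤) (hw : AEStronglyMeasurable w μ)
    (hw₀ : ∀ᵐ x ∂μ, w x ≠ 0) (F : Lp E p (μ.withDensity fun x => ‖w x‖ₑ ^ p.toReal)) :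
    lpWithDensitySMulₗᵢ hp hw hw₀ F =ᵐ[μ] fun x => w x • F x :=
  ((memLp_withDensity_enorm_rpow_iff hp hw hw₀).1 (Lp.memLp F)).coeFn_toLp

lemma lpWithDensitySMulₗᵢ_surjective (hp : p ≠ ⊤) (hw : AEStronglyMeasurable w μ)
    (hw₀ : ∀ᵐ x ∂μ, w x ≠ 0) :
    Function.Surjective (lpWithDensitySMulₗᵢ (E := E) hp hw hw₀) := by
  intro G
  have hG : (fun x => w x • (w x)⁻¹ • G x) =ᵐ[μ] G := by
    filter_upwards [hw₀] with x hx
    exact smul_inv_smul₀ hx (G x)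
  have hF : MemLp (fun x => (w x)⁻¹ • G x) p (μ.withDensity fun x => ‖w x‖ₑ ^ p.toReal) :=
    (memLp_withDensity_enorm_rpow_iff hp hw hw₀).2 ((Lp.memLp G).ae_eq hG.symm)
  refine ⟨hF.toLp _, Lp.ext ?_⟩
  filter_upwards [coeFn_lpWithDensitySMulₗᵢ hp hw hw₀ (hF.toLp _), hG,
    (absolutelyContinuous_withDensity_enorm_rpow hw hw₀ _).ae_le hF.coeFn_toLp] with x hmul hGx hFx
  rw [hmul, hFx, hGx]

end WithDensity

section Composition

variable {α β 𝕜 E : Type*} [MeasurableSpace α] [MeasurableSpace β] {μ : Measure α} {ν : Measure β}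
  [NormedRing 𝕜] [NormedAddCommGroup E] [Module 𝕜 E] [IsBoundedSMul 𝕜 E] {p : ENNReal}
  {f : α → β}

lemma compMeasurePreservingₗᵢ_surjective [Fact (1 ≤ p)] (hf : MeasurePreserving f μ ν)
    (hfe : MeasurableEmbedding f) :
    Function.Surjective (Lp.compMeasurePreservingₗᵢ 𝕜 f hf : Lp E p ν →ₗᵢ[𝕜] Lp E p μ) := by
  intro g
  have hext : Function.extend f g 0 ∘ f = g := Function.extend_comp hfe.injective _ _
  have hG : MemLp (Function.extend f g 0) p ν := by
    rw [← hf.map_eq, hfe.memLp_map_measure_iff, hext]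
    exact Lp.memLp g
  refine ⟨hG.toLp _, ?_⟩
  calc Lp.compMeasurePreserving f hf (hG.toLp _)
      = (hG.comp_measurePreserving hf).toLp _ := Lp.toLp_compMeasurePreserving hG hf
    _ = (Lp.memLp g).toLp g := by simp only [hext]
    _ = g := Lp.toLp_coeFn g _

end Composition

section WeightedComposition

variable {α β 𝕜 E : Type*} [MeasurableSpace α] [MeasurableSpace β] {μ : Measure α} {ν : Measure β}
  [NormedField 𝕜] [NormedAddCommGroup E] [NormedSpace 𝕜 E] {p : ENNReal} [Fact (1 ≤ p)]
  {f : α → β} {w : α → 𝕜}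

/-- The weighted composition operator `F ↦ w • (F ∘ f)` as a linear isometry equivalence from
`Lᵖ(ν)` onto `Lᵖ(μ)`, where `f` pushes the measure `‖w‖ᵖ μ` forward to `ν`. -/
def lpWeightedComp (hp : p ≠ ⊤) (hw : AEStronglyMeasurable w μ) (hw₀ : ∀ᵐ x ∂μ, w x ≠ 0)
    (hf : MeasurePreserving f (μ.withDensity fun x => ‖w x‖ₑ ^ p.toReal) ν)
    (hfe : MeasurableEmbedding f) : Lp E p ν ≃ₗᵢ[𝕜] Lp E p μ :=
  (LinearIsometryEquiv.ofSurjective (Lp.compMeasurePreservingₗᵢ 𝕜 f hf :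
    Lp E p ν →ₗᵢ[𝕜] Lp E p (μ.withDensity fun x => ‖w x‖ₑ ^ p.toReal))
    (compMeasurePreservingₗᵢ_surjective hf hfe)).trans
  (LinearIsometryEquiv.ofSurjective (lpWithDensitySMulₗᵢ hp hw hw₀)
    (lpWithDensitySMulₗᵢ_surjective hp hw hw₀))

lemma coeFn_lpWeightedComp (hp : p ≠ ⊤) (hw : AEStronglyMeasurable w μ) (hw₀ : ∀ᵐ x ∂μ, w x ≠ 0)
    (hf : MeasurePreserving f (μ.withDensity fun x => ‖w x‖ₑ ^ p.toReal) ν)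
    (hfe : MeasurableEmbedding f) (F : Lp E p ν) :
    lpWeightedComp hp hw hw₀ hf hfe F =ᵐ[μ] fun x => w x • F (f x) := by
  filter_upwards [coeFn_lpWithDensitySMulₗᵢ hp hw hw₀ (Lp.compMeasurePreserving f hf F),
    (absolutelyContinuous_withDensity_enorm_rpow hw hw₀ _).ae_le
      (Lp.coeFn_compMeasurePreserving F hf)] with x hmul hcomp
  exact hmul.trans (congrArg (w x • ·) hcomp)

end WeightedComposition

lemma map_withDensity_abs_deriv_eq_addHaar (μ : Measure ℝ) [μ.IsAddHaarMeasure] {f f' : ℝ → ℝ}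
    {s : Set ℝ} (hs : NullMeasurableSet s μ) (hf' : ∀ x ∈ s, HasDerivWithinAt f (f' x) s x)
    (hf : Set.InjOn f s) :
    ((μ.restrict s).withDensity fun x => ENNReal.ofReal |f' x|).map f = μ.restrict (f '' s) := by
  simpa only [ContinuousLinearMap.det_toSpanSingleton] using
    map_withDensity_abs_det_fderiv_eq_addHaar μ hs
      (fun x hx => (hf' x hx).hasFDerivWithinAt) hf

section Cayley

open ProbabilityTheory

/-- The angle `2 arctan x + π ∈ (0, 2π)` of the Cayley transform
`(x - i) / (x + i) = -e^{2i arctan x}`. -/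
def cayleyAngle (x : ℝ) : ℝ := 2 * arctan x + π

lemma hasDerivAt_cayleyAngle (x : ℝ) : HasDerivAt cayleyAngle (2 * (1 / (1 + x ^ 2))) x :=
  ((hasDerivAt_arctan x).const_mul 2).add_const π

lemma continuous_cayleyAngle : Continuous cayleyAngle :=
  (continuous_arctan.const_mul 2).add_const π

lemma cayleyAngle_injective : Function.Injective cayleyAngle := fun _ _ h =>
  arctan_injective (mul_left_cancel₀ two_ne_zero (add_right_cancel h))

lemma range_cayleyAngle : Set.range cayleyAngle = Set.Ioo 0 (2 * π) := by
  have hcomp : cayleyAngle = (· + π) ∘ (2 * ·) ∘ arctan := rfl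
  rw [hcomp, Set.range_comp, Set.range_comp, range_arctan, Set.image_mul_left_Ioo two_pos,
    Set.image_add_const_Ioo]
  congr 1 <;> ring

/-- The Cayley transform `ℝ → S¹`, with `S¹` realized as `ℝ / 2πℤ`. -/
def cayleyCircle (x : ℝ) : AddCircle (2 * π) := cayleyAngle x

lemma measurableEmbedding_cayleyCircle : MeasurableEmbedding cayleyCircle := by
  have hcont : Continuous cayleyCircle :=
    (AddCircle.continuous_mk' (2 * π)).comp continuous_cayleyAngle
  have hmem (x : ℝ) : cayleyAngle x ∈ Set.Ico 0 (0 + 2 * π) := by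
    rw [zero_add]
    exact Set.Ioo_subset_Ico_self (range_cayleyAngle ▸ Set.mem_range_self x)
  exact hcont.measurableEmbedding fun x y h =>
    cayleyAngle_injective ((AddCircle.coe_eq_coe_iff_of_mem_Ico (hmem x) (hmem y)).1 h)

lemma measurePreserving_cayleyCircle_volume :
    MeasurePreserving cayleyCircle
      (volume.withDensity fun x => ENNReal.ofReal |2 * (1 / (1 + x ^ 2))|) volume := by
  have hangle : MeasurePreserving cayleyAngle
      (volume.withDensity fun x => ENNReal.ofReal |2 * (1 / (1 + x ^ 2))|)
      (volume.restrict (Set.Ioc 0 (0 + 2 * π))) := by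
    refine ⟨continuous_cayleyAngle.measurable, ?_⟩
    rw [zero_add, ← Measure.restrict_congr_set Ioo_ae_eq_Ioc, ← range_cayleyAngle,
      ← Set.image_univ]
    simpa only [Measure.restrict_univ] using map_withDensity_abs_deriv_eq_addHaar volume
      nullMeasurableSet_univ (fun x _ => (hasDerivAt_cayleyAngle x).hasDerivWithinAt)
      cayleyAngle_injective.injOn
  exact (AddCircle.measurePreserving_mk (2 * π) 0).comp hangle

lemma cauchyMeasure_zero_one_eq_smul :
    cauchyMeasure 0 1 = (ENNReal.ofReal (2 * π))⁻¹ •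
      volume.withDensity fun x => ENNReal.ofReal |2 * (1 / (1 + x ^ 2))| := by
  rw [cauchyMeasure_of_scale_ne_zero 0 one_ne_zero, ← withDensity_smul _ (by fun_prop)]
  congr 1
  ext x
  rw [Pi.smul_apply, smul_eq_mul, ← ENNReal.ofReal_inv_of_pos two_pi_pos,
    ← ENNReal.ofReal_mul (by positivity), abs_of_pos (by positivity),
    cauchyPDF_def, cauchyPDFReal_def]
  congr 1
  simp only [NNReal.coe_one]
  field_simp
  ring

lemma measurePreserving_cayleyCircle :
    MeasurePreserving cayleyCircle (cauchyMeasure 0 1) (@haarAddCircle (2 * π) _) := by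
  have hhaar : @haarAddCircle (2 * π) _ = (ENNReal.ofReal (2 * π))⁻¹ • volume := by
    rw [volume_eq_smul_haarAddCircle, smul_smul,
      ENNReal.inv_mul_cancel (ENNReal.ofReal_pos.2 two_pi_pos).ne' ENNReal.ofReal_ne_top, one_smul]
  rw [cauchyMeasure_zero_one_eq_smul, hhaar]
  exact measurePreserving_cayleyCircle_volume.smul_measure _

lemma integral_cauchyPDFReal_smul_comp_cayleyCircle {E : Type*} [NormedAddCommGroup E]
    [NormedSpace ℝ E] (g : AddCircle (2 * π) → E) :
    ∫ x, cauchyPDFReal 0 1 x • g (cayleyCircle x) = ∫ z, g z ∂(@haarAddCircle (2 * π) _) := by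
  rw [← measurePreserving_cayleyCircle.integral_comp measurableEmbedding_cayleyCircle,
    cauchyMeasure_of_scale_ne_zero 0 one_ne_zero,
    integral_withDensity_eq_integral_toReal_smul (measurable_cauchyPDF 0 1)
      (ae_of_all _ fun _ => ENNReal.ofReal_lt_top)]
  simp only [cauchyPDF_def, ENNReal.toReal_ofReal (cauchyPDF_pos 0 one_ne_zero _).le]

/-- The multiplier `π^{-1/2} / (x + i)` of the unitary induced by the Cayley transform. -/
def cayleyWeight (x : ℝ) : ℂ := (√π : ℂ)⁻¹ * (x + Complex.I)⁻¹

lemma ofReal_add_I_ne_zero (x : ℝ) : (x : ℂ) + Complex.I ≠ 0 := fun h => by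
  simpa using congrArg Complex.im h

lemma cayleyWeight_ne_zero (x : ℝ) : cayleyWeight x ≠ 0 :=
  mul_ne_zero (inv_ne_zero (Complex.ofReal_ne_zero.2 (sqrt_pos.2 pi_pos).ne'))
    (inv_ne_zero (ofReal_add_I_ne_zero x))

lemma continuous_cayleyWeight : Continuous cayleyWeight :=
  continuous_const.mul ((Complex.continuous_ofReal.add continuous_const).inv₀ ofReal_add_I_ne_zero)

lemma norm_cayleyWeight_sq (x : ℝ) : ‖cayleyWeight x‖ ^ 2 = cauchyPDFReal 0 1 x := by
  have hsqrt : ‖(√π : ℂ)‖ ^ 2 = π := by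
    rw [Complex.norm_real, norm_eq_abs, sq_abs, sq_sqrt pi_pos.le]
  have hadd : ‖(x : ℂ) + Complex.I‖ ^ 2 = x ^ 2 + 1 := by
    simpa [Complex.sq_norm] using Complex.normSq_add_mul_I x 1
  rw [cayleyWeight, norm_mul, norm_inv, norm_inv, mul_pow, inv_pow, inv_pow, hsqrt, hadd,
    cauchyPDFReal_def]
  simp

lemma withDensity_enorm_cayleyWeight_rpow :
    (volume.withDensity fun x => ‖cayleyWeight x‖ₑ ^ (2 : ENNReal).toReal) =
      cauchyMeasure 0 1 := by
  rw [cauchyMeasure_of_scale_ne_zero 0 one_ne_zero]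
  congr 1
  ext x
  rw [cauchyPDF_def, ← norm_cayleyWeight_sq, ENNReal.ofReal_pow (norm_nonneg _),
    ofReal_norm, ENNReal.toReal_ofNat, ENNReal.rpow_ofNat]

lemma measurePreserving_cayleyCircle_withDensity :
    MeasurePreserving cayleyCircle
      (volume.withDensity fun x => ‖cayleyWeight x‖ₑ ^ (2 : ENNReal).toReal)
      (@haarAddCircle (2 * π) _) :=
  withDensity_enorm_cayleyWeight_rpow ▸ measurePreserving_cayleyCircle

/-- The unitary from `L²(S¹)` onto `L²(ℝ)` induced by the Cayley transform, for functions with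
values in a complex normed space `E`. -/
def cayleyUnitary (E : Type*) [NormedAddCommGroup E] [NormedSpace ℂ E] :
    Lp E 2 (@haarAddCircle (2 * π) _) ≃ₗᵢ[ℂ] Lp E 2 (volume : Measure ℝ) :=
  lpWeightedComp ENNReal.ofNat_ne_top continuous_cayleyWeight.aestronglyMeasurable
    (ae_of_all _ cayleyWeight_ne_zero) measurePreserving_cayleyCircle_withDensity
    measurableEmbedding_cayleyCircle

lemma coeFn_cayleyUnitary {E : Type*} [NormedAddCommGroup E] [NormedSpace ℂ E]
    (F : Lp E 2 (@haarAddCircle (2 * π) _)) :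
    cayleyUnitary E F =ᵐ[volume] fun x => cayleyWeight x • F (cayleyCircle x) :=
  coeFn_lpWeightedComp _ _ _ _ _ F

theorem cayley_transform_unitary_general {E : Type*} [NormedAddCommGroup E] [NormedSpace ℂ E] :
    (∃ Θ : Lp E 2 (@haarAddCircle (2 * π) _) ≃ₗᵢ[ℂ] Lp E 2 (volume : Measure ℝ),
      ∀ F : Lp E 2 (@haarAddCircle (2 * π) _),
        (Θ F : ℝ → E) =ᵐ[volume] fun x : ℝ =>
          (√π : ℂ)⁻¹ • ((x : ℂ) + Complex.I)⁻¹ • F (↑(2 * arctan x + π))) ∧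
    ∀ F : Lp E 2 (@haarAddCircle (2 * π) _),
      (1 / π) * (∫ x : ℝ, ‖F (↑(2 * arctan x + π))‖ ^ 2 / (x ^ 2 + 1))
        = ∫ z : AddCircle (2 * π), ‖F z‖ ^ 2 ∂(@haarAddCircle (2 * π) _) := by
  refine ⟨⟨cayleyUnitary E, fun F => ?_⟩, fun F => ?_⟩
  · simpa only [cayleyWeight, cayleyCircle, cayleyAngle, mul_smul] using coeFn_cayleyUnitary F
  · rw [← integral_cauchyPDFReal_smul_comp_cayleyCircle, ← integral_const_mul]
    congr with x
    have hpdf : cauchyPDFReal 0 1 x = 1 / π * (1 / (x ^ 2 + 1)) := by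
      simp [cauchyPDFReal_def]
    rw [hpdf, smul_eq_mul, mul_assoc, one_div_mul_eq_div (x ^ 2 + 1), cayleyCircle, cayleyAngle]

end Cayley

/-- **The Cayley transform induces a unitary from `L²(S¹)` onto `L²(ℝ)`.**
Here `L²(S¹)` is realized on `ℝ/2πℤ` (via `λ ↦ e^{iλ}`) with normalized Haar
measure, and the Cayley transform `θ(x) = (x−i)/(x+i) = e^{i(2·arctan x + π)}`
corresponds to the point `2·arctan x + π` of `ℝ/2πℤ`.  The map
`(θ̃ f)(x) = π^{−1/2} · f(θ(x)) / (x + i)` is a surjective linear isometry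
`L²(S¹) → L²(ℝ)`; in particular
`(1/π) ∫_ℝ ‖f(θ(x))‖²/(x²+1) dx = ∫_{S¹} ‖f‖²` (the latter w.r.t. normalized
Haar measure, i.e. `(1/2π) ∫₀^{2π} ‖f(e^{iλ})‖² dλ`). -/
theorem cayley_transform_unitary :
    (∃ Θ : Lp ℂ 2 (@haarAddCircle (2 * π) _) ≃ₗᵢ[ℂ] Lp ℂ 2 (volume : Measure ℝ),
      ∀ F : Lp ℂ 2 (@haarAddCircle (2 * π) _),
        (Θ F : ℝ → ℂ) =ᵐ[volume] fun x : ℝ =>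
          ((Real.sqrt π : ℂ))⁻¹ * (F (↑(2 * Real.arctan x + π)) / ((x : ℂ) + Complex.I))) ∧
    ∀ F : Lp ℂ 2 (@haarAddCircle (2 * π) _),
      (1 / π) * (∫ x : ℝ, ‖(F (↑(2 * Real.arctan x + π)) : ℂ)‖ ^ 2 / (x ^ 2 + 1))
        = ∫ z : AddCircle (2 * π), ‖F z‖ ^ 2 ∂(@haarAddCircle (2 * π) _) := by
  simpa only [smul_eq_mul, div_eq_inv_mul] using cayley_transform_unitary_general (E := ℂ)

end
end
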